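/- arXiv:math/9908069 — 3 statements merged into one kernel-verified Lean document; each statement's English description precedes it below -/
import Mathlib

section
/- In the algebra CP_q^{N−1}, for all 1 ≤ i,k ≤ N one has Σ_{j=1}^{N} q^{−2j} x_ij x_jk = q^{−2} x_ik (equivalently, Σ_{j=1}^{N} q^{2−2j} x_ij x_jk = x_ik); i.e. this relation is implied by the defining relations of CP_q^{N−1}. -/
open scoped BigOperators

noncomputable section

/-- index value in `{1,…,N}` of `i : Fin N` -/
def iv {N : ℕ} (i : Fin N) : ℤ := (i : ℕ) + 1

/-- `pw q m = q ^ m` as a complex number -/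
def pw (q : ℝ) (m : ℤ) : ℂ := (q : ℂ) ^ m

/-- Kronecker delta -/
def kd {N : ℕ} (i j : Fin N) : ℂ := if i = j then 1 else 0

/-- the R-matrix of `SU_q(N)`: entry `R^{ij}_{kl}` -/
def Rmat (q : ℝ) {N : ℕ} (i j k l : Fin N) : ℂ :=
  if i = l ∧ k = j ∧ i ≠ k then 1
  else if i = j ∧ j = k ∧ k = l then (q : ℂ)
  else if i = k ∧ j = l ∧ i < j then (q : ℂ) - (q : ℂ)⁻¹
  else 0

/-- `R⁻ = R - (q - q⁻¹) I` -/
def Rminus (q : ℝ) {N : ℕ} (i j k l : Fin N) : ℂ :=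
  Rmat q i j k l - ((q : ℂ) - (q : ℂ)⁻¹) * (if i = k ∧ j = l then 1 else 0)

def Rc (q : ℝ) {N : ℕ} (i j k l : Fin N) : ℂ := Rmat q l k j i
def Rl (q : ℝ) {N : ℕ} (i j k l : Fin N) : ℂ := pw q (2 * iv l - 2 * iv i) * Rmat q j l i k
def Rr (q : ℝ) {N : ℕ} (i j k l : Fin N) : ℂ := Rmat q k i l j
def Rcm (q : ℝ) {N : ℕ} (i j k l : Fin N) : ℂ := Rminus q l k j i
def Rlm (q : ℝ) {N : ℕ} (i j k l : Fin N) : ℂ := pw q (2 * iv l - 2 * iv i) * Rminus q j l i k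
def Rrm (q : ℝ) {N : ℕ} (i j k l : Fin N) : ℂ := Rminus q k i l j

/-- `RCP^{stuv}_{ijkl} = Σ_{a,b,c} Rlm^{tu}_{ab} R^{sa}_{ic} Rr^{cb}_{jk} δ_{vl}` -/
def RCP (q : ℝ) {N : ℕ} (s t u v i j k l : Fin N) : ℂ :=
  (if v = l then (1 : ℂ) else 0) *
    ∑ a : Fin N, ∑ b : Fin N, ∑ c : Fin N, Rlm q t u a b * Rmat q s a i c * Rr q c b j k

/-- `RCPm^{stuv}_{ijkl} = Σ_{a,b,c} Rlm^{tu}_{ab} R⁻^{sa}_{ic} Rr^{cb}_{jk} δ_{vl}` -/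
def RCPm (q : ℝ) {N : ℕ} (s t u v i j k l : Fin N) : ℂ :=
  (if v = l then (1 : ℂ) else 0) *
    ∑ a : Fin N, ∑ b : Fin N, ∑ c : Fin N, Rlm q t u a b * Rminus q s a i c * Rr q c b j k

/-- `RCPc^{stuv}_{ijkl} = Σ_{a,b,c} Rlm^{tu}_{ab} Rc^{bv}_{cl} Rr^{ac}_{jk} δ_{si}` -/
def RCPc (q : ℝ) {N : ℕ} (s t u v i j k l : Fin N) : ℂ :=
  (if s = i then (1 : ℂ) else 0) *
    ∑ a : Fin N, ∑ b : Fin N, ∑ c : Fin N, Rlm q t u a b * Rc q b v c l * Rr q a c j k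

/-- `RCPcm^{stuv}_{ijkl} = Σ_{a,b,c} Rlm^{tu}_{ab} Rcm^{bv}_{cl} Rr^{ac}_{jk} δ_{si}` -/
def RCPcm (q : ℝ) {N : ℕ} (s t u v i j k l : Fin N) : ℂ :=
  (if s = i then (1 : ℂ) else 0) *
    ∑ a : Fin N, ∑ b : Fin N, ∑ c : Fin N, Rlm q t u a b * Rcm q b v c l * Rr q a c j k

/-- `s+ = Σ_{i=0}^{N-1} q^{2i}` -/
def sP (q : ℝ) (N : ℕ) : ℂ := ∑ i ∈ Finset.range N, (q : ℂ) ^ (2 * i)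
/-- `s'+ = s+ - 1` -/
def s1P (q : ℝ) (N : ℕ) : ℂ := sP q N - 1
/-- `s''+ = s'+ - q²` -/
def s2P (q : ℝ) (N : ℕ) : ℂ := s1P q N - (q : ℂ) ^ 2
/-- `s''''+ = s''+ - q⁴ - q⁶` -/
def s4P (q : ℝ) (N : ℕ) : ℂ := s2P q N - (q : ℂ) ^ 4 - (q : ℂ) ^ 6

/-- the free algebra on the `N²` generators `x_ij` -/
abbrev FA (N : ℕ) := FreeAlgebra ℂ (Fin N × Fin N)

/-- the generator `x_ij` of the free algebra -/
def gen {N : ℕ} (i j : Fin N) : FA N := FreeAlgebra.ι ℂ (i, j)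

/-- the defining relations of quantum projective space -/
inductive CPrel (q : ℝ) (N : ℕ) : FA N → FA N → Prop
  | relm (i j k l : Fin N) :
      CPrel q N
        (∑ s : Fin N, ∑ t : Fin N, ∑ u : Fin N, ∑ v : Fin N,
          RCPm q s t u v i j k l • (gen s t * gen u v))
        ((q : ℂ)⁻¹ • (gen i j * gen k l))
  | relc (i j k l : Fin N) :
      CPrel q N
        (∑ s : Fin N, ∑ t : Fin N, ∑ u : Fin N, ∑ v : Fin N,
          RCPc q s t u v i j k l • (gen s t * gen u v))
        ((q : ℂ) • (gen i j * gen k l))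
  | relu : CPrel q N (∑ i : Fin N, gen i i) 1

/-- quantum projective space `CP_q^{N-1}`: the quotient of the free algebra by the
two-sided ideal generated by the defining relations -/
abbrev CPq (q : ℝ) (N : ℕ) := RingQuot (CPrel q N)

/-- the generator `x_ij` of `CP_q^{N-1}` -/
def X (q : ℝ) {N : ℕ} (i j : Fin N) : CPq q N :=
  RingQuot.mkAlgHom ℂ (CPrel q N) (gen i j)

/-- a first order differential calculus on a unital ℂ-algebra `A`:
a bimodule `Γ`, a ℂ-linear `d` satisfying the Leibniz rule, with `Γ = Lin{a·db}` -/
structure FODC (A : Type) [Ring A] [Algebra ℂ A] where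
  Γ : Type
  [grp : AddCommGroup Γ]
  [modC : Module ℂ Γ]
  [modL : Module A Γ]
  [modR : Module Aᵐᵒᵖ Γ]
  [smulComm : SMulCommClass A Aᵐᵒᵖ Γ]
  [towerL : IsScalarTower ℂ A Γ]
  [towerR : IsScalarTower ℂ Aᵐᵒᵖ Γ]
  d : A → Γ
  d_add : ∀ a b : A, d (a + b) = d a + d b
  d_smul : ∀ (c : ℂ) (a : A), d (c • a) = c • d a
  leibniz : ∀ a b : A, d (a * b) = MulOpposite.op b • d a + a • d b
  spanning : Submodule.span ℂ {z : Γ | ∃ a b : A, z = a • d b} = ⊤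

attribute [instance] FODC.grp FODC.modC FODC.modL FODC.modR FODC.smulComm
attribute [instance] FODC.towerL FODC.towerR

/-- the invariant one-form `⍵ = Σ_{i,j} q^{-2j} x_ij · d x_ji` -/
def om (q : ℝ) {N : ℕ} (D : FODC (CPq q N)) : D.Γ :=
  ∑ i : Fin N, ∑ j : Fin N, pw q (-2 * iv j) • (X q i j • D.d (X q j i))

/-- the free left `CP_q^{N-1}`-module on `N²` symbols `e_ij` -/
abbrev FMod (q : ℝ) (N : ℕ) := Fin N × Fin N → CPq q N

/-- the standard generator `e_ij` of the free module -/
def e (q : ℝ) {N : ℕ} (i j : Fin N) : FMod q N := Pi.single (i, j) 1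

/-- `ω̂ = Σ_{k,l} q^{-2l} x_kl e_lk` in the free module -/
def omHat (q : ℝ) (N : ℕ) : FMod q N :=
  ∑ k : Fin N, ∑ l : Fin N, pw q (-2 * iv l) • (X q k l • e q l k)

/-- the left-module map `π : F → Γ` with `π(e_ij) = d x_ij` -/
def piMap (q : ℝ) {N : ℕ} (D : FODC (CPq q N)) : FMod q N → D.Γ :=
  fun f => ∑ p : Fin N × Fin N, f p • D.d (X q p.1 p.2)

/-- `ρ_ij = e_ij - A Σ_s q^{-2s} x_is e_sj - B Σ Rlm^{tu}_{bc} R⁻^{sb}_{ia} Rc^{cv}_{aj} x_st e_uv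
  - C x_ij ω̂ - E q^{2j} δ_ij ω̂` -/
def rho (q : ℝ) {N : ℕ} (A B C E : ℂ) (i j : Fin N) : FMod q N :=
  e q i j
    - A • (∑ s : Fin N, pw q (-2 * iv s) • (X q i s • e q s j))
    - B • (∑ a : Fin N, ∑ b : Fin N, ∑ c : Fin N, ∑ s : Fin N, ∑ t : Fin N, ∑ u : Fin N,
        ∑ v : Fin N, (Rlm q t u b c * Rminus q s b i a * Rc q c v a j) • (X q s t • e q u v))
    - C • (X q i j • omHat q N)
    - (E * pw q (2 * iv j) * kd i j) • omHat q N

/-- `ρ'_ij = e_ij - A Σ_s q^{-2s} x_is e_sj - B Σ Rlm^{tu}_{bc} R⁻^{sb}_{ia} Rc^{cv}_{aj} x_st e_uv` -/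
def rho' (q : ℝ) {N : ℕ} (A B : ℂ) (i j : Fin N) : FMod q N :=
  e q i j
    - A • (∑ s : Fin N, pw q (-2 * iv s) • (X q i s • e q s j))
    - B • (∑ a : Fin N, ∑ b : Fin N, ∑ c : Fin N, ∑ s : Fin N, ∑ t : Fin N, ∑ u : Fin N,
        ∑ v : Fin N, (Rlm q t u b c * Rminus q s b i a * Rc q c v a j) • (X q s t • e q u v))

/-- the one-forms `τ_ij` generating the sub-bimodule which is factored out
to pass from the calculus of Thm 2(1) to the restricted calculus -/
def tau (q : ℝ) {N : ℕ} (D : FODC (CPq q N)) (i j : Fin N) : D.Γ :=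
  D.d (X q i j)
    - (q : ℂ) ^ 2 • (∑ s : Fin N, pw q (-2 * iv s) • (X q i s • D.d (X q s j)))
    - (q : ℂ)⁻¹ • (∑ a : Fin N, ∑ b : Fin N, ∑ c : Fin N, ∑ s : Fin N, ∑ t : Fin N, ∑ u : Fin N,
        ∑ v : Fin N, (Rlm q t u b c * Rminus q s b i a * Rc q c v a j) • (X q s t • D.d (X q u v)))
    + (s2P q N / s1P q N) • (X q i j • om q D)
    + ((1 / s1P q N) * pw q (2 * iv j) * kd i j) • om q D

/-- the index set `{(i,j) : (i,j) ≠ (N,N)}` -/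
abbrev FreeIdx (N : ℕ) := {p : Fin N × Fin N // ¬((p.1 : ℕ) = N - 1 ∧ (p.2 : ℕ) = N - 1)}

/-- `{d x_ij : (i,j) ≠ (N,N)}` is a basis of `Γ` as a left `CP_q^{N-1}`-module -/
def HasFreeBasis (q : ℝ) {N : ℕ} (D : FODC (CPq q N)) : Prop :=
  LinearIndependent (CPq q N) (fun p : FreeIdx N => D.d (X q p.1.1 p.1.2)) ∧
    Submodule.span (CPq q N) (Set.range fun p : FreeIdx N => D.d (X q p.1.1 p.1.2)) = ⊤

/-!
Setting `i = j` in the relation of `RCPm` and summing turns its right-hand side into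
`q⁻¹ (∑ i, x_ii) x_kl`. On the left-hand side the factor `Rr` supplies `R`, which cancels against
`R⁻ = R⁻¹`; what remains of the coefficients is the partial quantum trace of `R⁻`, a telescoping
sum equal to `q δ`. Hence `q⁻¹ (∑ i, x_ii) x_kl = q ∑ j, q^{-2j} x_kj x_jl` already in any algebra
satisfying this one relation, and the trace condition `∑ i, x_ii = 1` finishes the proof.
-/

section RMatrix

variable (q : ℝ) {N : ℕ}

lemma Rmat_eq_ite (i j k l : Fin N) :
    Rmat q i j k l =
      (if k = j then if l = i then if i = j then (q : ℂ) else 1 else 0 else 0) +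
        if k = i then if l = j then if i < j then (q : ℂ) - (q : ℂ)⁻¹ else 0 else 0 else 0 := by
  unfold Rmat
  split_ifs <;> grind

lemma Rminus_eq_ite (i j k l : Fin N) :
    Rminus q i j k l =
      (if k = j then if l = i then if i = j then (q : ℂ)⁻¹ else 1 else 0 else 0) -
        if k = i then if l = j then if j < i then (q : ℂ) - (q : ℂ)⁻¹ else 0 else 0 else 0 := by
  rw [Rminus, Rmat_eq_ite]
  split_ifs <;> grind

lemma sum_Rminus_mul (f : Fin N → Fin N → ℂ) (i j : Fin N) :
    ∑ k, ∑ l, Rminus q i j k l * f k l =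
      (if i = j then (q : ℂ)⁻¹ else 1) * f j i -
        (if j < i then (q : ℂ) - (q : ℂ)⁻¹ else 0) * f i j := by
  simp only [Rminus_eq_ite, sub_mul, ite_mul, zero_mul, Finset.sum_sub_distrib,
    Finset.sum_ite_irrel, Finset.sum_const_zero, Finset.sum_ite_eq', Finset.mem_univ, if_true]

variable {q}

lemma pw_add (hq : q ≠ 0) (m n : ℤ) : pw q (m + n) = pw q m * pw q n :=
  zpow_add₀ (Complex.ofReal_ne_zero.mpr hq) m n

lemma sum_Rminus_mul_Rmat (hq : q ≠ 0) (i j m n : Fin N) :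
    ∑ k, ∑ l, Rminus q i j k l * Rmat q k l m n = kd i m * kd j n := by
  have hq' : (q : ℂ) ≠ 0 := Complex.ofReal_ne_zero.mpr hq
  rw [sum_Rminus_mul, Rmat_eq_ite, Rmat_eq_ite]
  rcases lt_trichotomy i j with h | rfl | h
  · simp [kd, h.ne, h.ne', h.not_gt, eq_comm, ← ite_and, and_comm]
  · simp [kd, hq', eq_comm, ← ite_and, and_comm]
  · simp [kd, h, h.ne, h.ne', h.not_gt, eq_comm, ← ite_and, and_comm]

-- A difference of consecutive values of one function, so that the sum over `a` telescopes.
lemma pw_two_mul_iv_mul_Rminus_self (hq : q ≠ 0) (a t : Fin N) :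
    pw q (2 * iv a) * Rminus q t a t a =
      (if (a : ℕ) ≤ t then (q : ℂ) ^ (2 * (a : ℕ) + 1) else 0) -
        if (a : ℕ) + 1 ≤ t then (q : ℂ) ^ (2 * ((a : ℕ) + 1) + 1) else 0 := by
  have hq' : (q : ℂ) ≠ 0 := Complex.ofReal_ne_zero.mpr hq
  have pw_eq : pw q (2 * iv a) = (q : ℂ) ^ (2 * (a : ℕ) + 2) := by
    rw [pw, ← zpow_natCast]
    rfl
  rw [pw_eq, Rminus_eq_ite]
  rcases lt_trichotomy a t with h | rfl | h
  · have h₁ : (a : ℕ) ≤ t := h.le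
    have h₂ : (a : ℕ) + 1 ≤ t := h
    simp only [h, h.ne, h.ne', h₁, h₂, if_true, if_false]
    field_simp
    ring
  · simp only [lt_irrefl, le_refl, Nat.not_succ_le_self, if_true, if_false]
    field_simp
    ring
  · have h₁ : ¬ (a : ℕ) ≤ t := not_le.mpr h
    have h₂ : ¬ (a : ℕ) + 1 ≤ t := fun h' ↦ h₁ (Nat.le_of_succ_le h')
    simp only [h.ne, h.ne', h.not_gt, h₁, h₂, if_true, if_false, mul_zero, sub_zero]

lemma sum_pw_mul_Rminus (hq : q ≠ 0) (t u : Fin N) :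
    ∑ a, pw q (2 * iv a) * Rminus q u a t a = q * kd u t := by
  rcases eq_or_ne u t with rfl | hut
  · let g : ℕ → ℂ := fun n ↦ if n ≤ u then (q : ℂ) ^ (2 * n + 1) else 0
    calc ∑ a, pw q (2 * iv a) * Rminus q u a u a
        = ∑ a : Fin N, (g a - g (a + 1)) :=
          Finset.sum_congr rfl fun a _ ↦ pw_two_mul_iv_mul_Rminus_self hq a u
      _ = g 0 - g N := by
          rw [Fin.sum_univ_eq_sum_range (fun n ↦ g n - g (n + 1)), Finset.sum_range_sub']
      _ = q * kd u u := by simp [g, kd]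
  · rw [kd, if_neg hut, mul_zero]
    refine Finset.sum_eq_zero fun a _ ↦ ?_
    rw [Rminus_eq_ite]
    split_ifs <;> grind

lemma sum_Rlm_diag (hq : q ≠ 0) (t u : Fin N) :
    ∑ a, Rlm q t u a a = q * pw q (-2 * iv t) * kd u t := by
  have pw_sub (a : Fin N) :
      pw q (2 * iv a - 2 * iv t) = pw q (-2 * iv t) * pw q (2 * iv a) := by
    rw [← pw_add hq, sub_eq_neg_add, neg_mul]
  calc ∑ a, Rlm q t u a a
      = pw q (-2 * iv t) * ∑ a, pw q (2 * iv a) * Rminus q u a t a := by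
        simp only [Rlm, pw_sub, mul_assoc, Finset.mul_sum]
    _ = q * pw q (-2 * iv t) * kd u t := by
        rw [sum_pw_mul_Rminus hq]
        ring

lemma sum_RCPm_diag (hq : q ≠ 0) (s t u v k l : Fin N) :
    ∑ i, RCPm q s t u v i i k l = kd v l * kd s k * kd u t * (q * pw q (-2 * iv t)) := by
  have cancel (a b : Fin N) :
      ∑ i, ∑ c, Rlm q t u a b * Rminus q s a i c * Rr q c b i k =
        Rlm q t u a b * (kd s k * kd a b) := by
    rw [← sum_Rminus_mul_Rmat hq]
    simp only [Rr, Finset.mul_sum, mul_assoc]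
  calc ∑ i, RCPm q s t u v i i k l
      = kd v l * ∑ a, ∑ b, ∑ i, ∑ c, Rlm q t u a b * Rminus q s a i c * Rr q c b i k := by
        simp only [RCPm, ← Finset.mul_sum, kd]
        rw [Finset.sum_comm]
        refine congrArg _ (Finset.sum_congr rfl fun a _ ↦ ?_)
        rw [Finset.sum_comm]
    _ = kd v l * kd s k * ∑ a, Rlm q t u a a := by
        simp only [cancel]
        simp only [kd, mul_ite, mul_one, mul_zero, Finset.sum_ite_eq, Finset.mem_univ, if_true]
        split_ifs <;> simp
    _ = kd v l * kd s k * kd u t * (q * pw q (-2 * iv t)) := by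
        rw [sum_Rlm_diag hq]
        ring

end RMatrix

section Algebra

variable {q : ℝ} {N : ℕ} {A : Type*} [Semiring A] [Algebra ℂ A]

lemma trace_mul_of_RCPm (hq : q ≠ 0) (x : Fin N → Fin N → A)
    (hx : ∀ i j k l, ∑ s, ∑ t, ∑ u, ∑ v, RCPm q s t u v i j k l • (x s t * x u v) =
      (q : ℂ)⁻¹ • (x i j * x k l)) (k l : Fin N) :
    (q : ℂ)⁻¹ • ((∑ i, x i i) * x k l) = (q : ℂ) • ∑ j, pw q (-2 * iv j) • (x k j * x j l) :=
  calc (q : ℂ)⁻¹ • ((∑ i, x i i) * x k l)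
      = ∑ i, ∑ s, ∑ t, ∑ u, ∑ v, RCPm q s t u v i i k l • (x s t * x u v) := by
        simp only [hx, Finset.sum_mul, Finset.smul_sum]
    _ = ∑ s, ∑ t, ∑ u, ∑ v, (∑ i, RCPm q s t u v i i k l) • (x s t * x u v) := by
        rw [Finset.sum_comm]
        refine Finset.sum_congr rfl fun s _ ↦ ?_
        rw [Finset.sum_comm]
        refine Finset.sum_congr rfl fun t _ ↦ ?_
        rw [Finset.sum_comm]
        refine Finset.sum_congr rfl fun u _ ↦ ?_
        rw [Finset.sum_comm]
        simp only [Finset.sum_smul]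
    _ = (q : ℂ) • ∑ j, pw q (-2 * iv j) • (x k j * x j l) := by
        simp only [sum_RCPm_diag hq, kd, ite_mul, one_mul, zero_mul, ite_smul, zero_smul,
          Finset.sum_ite_irrel, Finset.sum_const_zero, Finset.sum_ite_eq', Finset.mem_univ,
          if_true, Finset.smul_sum, smul_smul]

theorem statement1_general (hq : q ≠ 0) (x : Fin N → Fin N → A)
    (hx : ∀ i j k l, ∑ s, ∑ t, ∑ u, ∑ v, RCPm q s t u v i j k l • (x s t * x u v) =
      (q : ℂ)⁻¹ • (x i j * x k l)) (hone : ∑ i, x i i = 1) (i k : Fin N) :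
    ∑ j, pw q (-2 * iv j) • (x i j * x j k) = pw q (-2) • x i k := by
  have hq' : (q : ℂ) ≠ 0 := Complex.ofReal_ne_zero.mpr hq
  have pw_neg_two : pw q (-2) = (q : ℂ)⁻¹ * (q : ℂ)⁻¹ := by
    rw [show (-2 : ℤ) = -1 + -1 by norm_num, pw_add hq, pw, zpow_neg_one]
  have contracted := trace_mul_of_RCPm hq x hx i k
  rw [hone, one_mul] at contracted
  rw [pw_neg_two, mul_smul, contracted, inv_smul_smul₀ hq']

end Algebra

section ProjectiveSpace

variable (q : ℝ) {N : ℕ}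

lemma sum_RCPm_smul_X_mul_X (i j k l : Fin N) :
    ∑ s, ∑ t, ∑ u, ∑ v, RCPm q s t u v i j k l • (X q s t * X q u v) =
      (q : ℂ)⁻¹ • (X q i j * X q k l) := by
  simpa only [X, map_sum, map_smul, map_mul] using
    RingQuot.mkAlgHom_rel ℂ (CPrel.relm (q := q) i j k l)

lemma sum_X_diag : ∑ i : Fin N, X q i i = 1 := by
  simpa only [X, map_sum, map_one] using
    RingQuot.mkAlgHom_rel ℂ (CPrel.relu (q := q) (N := N))

end ProjectiveSpace

/-- `Σ_j q^{-2j} x_ij x_jk = q^{-2} x_ik` holds in `CP_q^{N-1}`. -/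
theorem statement1 (q : ℝ) (hq0 : q ≠ 0) (hq1 : q ≠ 1) (hq2 : q ≠ -1) (N : ℕ) (hN : 2 ≤ N) (i k : Fin N) :
    (∑ j : Fin N, pw q (-2 * iv j) • (X q i j * X q j k)) = pw q (-2) • X q i k :=
  statement1_general hq0 (X q) (sum_RCPm_smul_X_mul_X q) (sum_X_diag q) i k
end
end

section
/- The algebra CP_q^{N−1} admits a *-structure with (x_ij)* = x_ji: there exists a map * : CP_q^{N−1} → CP_q^{N−1} which is conjugate-linear, involutive ((a*)* = a), anti-multiplicative ((ab)* = b* a*), unital (1* = 1), and satisfies (x_ij)* = x_ji for all 1 ≤ i,j ≤ N. -/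
open scoped BigOperators

noncomputable section

/-! The `*`-structure is the conjugate-linear antihomomorphism sending `x_ij` to `x_ji`; what must
be checked is that it respects the relations. It turns the coefficients `C^{stuv}_{ijkl}` of a
quadratic relation into the conjugates of `C^{vuts}_{lkji}`. All coefficients are real, and this
reversal of indices exchanges `RCPc` and `RCP`. Finally `Rlm` and `Rr` are inverse to each other, so
`R = R⁻ + (q - q⁻¹) I` gives `RCP = RCPm + (q - q⁻¹) I`: the relation of `RCPm` with eigenvalue
`q⁻¹` is equivalent to the relation of `RCP` with eigenvalue `q`. Hence the `*` exchanges the two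
families of quadratic relations. -/

open MulOpposite

section SemilinearLift

variable {R S X A : Type*} [CommSemiring R] [CommSemiring S] [Semiring A] [Algebra S A]

/-- The extension of a map `X → A` to a ring homomorphism out of the free `R`-algebra on `X` which
is semilinear along `σ : R →+* S`. It is the usual linear extension for the `R`-algebra structure
on `A` pulled back along `σ`. -/
def semilinearLift (σ : R →+* S) (f : X → A) : FreeAlgebra R X →+* A :=
  letI := Algebra.compHom A σ
  (FreeAlgebra.lift R f).toRingHom

theorem semilinearLift_ι (σ : R →+* S) (f : X → A) (x : X) :
    semilinearLift σ f (FreeAlgebra.ι R x) = f x :=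
  letI := Algebra.compHom A σ
  FreeAlgebra.lift_ι_apply f x

theorem semilinearLift_algebraMap (σ : R →+* S) (f : X → A) (r : R) :
    semilinearLift σ f (algebraMap R _ r) = algebraMap S A (σ r) :=
  letI := Algebra.compHom A σ
  (FreeAlgebra.lift R f).commutes r

end SemilinearLift

section StarOfAntihom

variable {R A B : Type*} [CommSemiring R] [Semiring A] [Algebra R A] [Semiring B]
  [Algebra R B]

theorem map_smul_of_map_algebraMap_star [Star R] {φ : B →+* Aᵐᵒᵖ}
    (hφ : ∀ r, φ (algebraMap R B r) = algebraMap R Aᵐᵒᵖ (star r)) (r : R) (b : B) :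
    φ (r • b) = star r • φ b := by
  rw [Algebra.smul_def, map_mul, hφ, ← Algebra.smul_def]

theorem involutive_unop_of_adjoin_eq_top [InvolutiveStar R] {φ : A →+* Aᵐᵒᵖ}
    (hφ : ∀ r, φ (algebraMap R A r) = algebraMap R Aᵐᵒᵖ (star r)) {s : Set A}
    (hs : Algebra.adjoin R s = ⊤) (hinv : ∀ a ∈ s, unop (φ (unop (φ a))) = a) :
    Function.Involutive fun a => unop (φ a) := by
  intro a
  have ha : a ∈ Algebra.adjoin R s := hs ▸ Algebra.mem_top
  induction ha using Algebra.adjoin_induction with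
  | mem a ha => exact hinv a ha
  | algebraMap r => simp only [hφ, MulOpposite.algebraMap_apply, unop_op, star_star]
  | add a b _ _ iha ihb => simp only [map_add, unop_add, iha, ihb]
  | mul a b _ _ iha ihb => simp only [map_mul, unop_mul, iha, ihb]

/-- The star ring structure whose involution is a given involutive antihomomorphism, the latter
being encoded as a homomorphism to the opposite ring. -/
abbrev starRingOfAntihom (φ : A →+* Aᵐᵒᵖ) (hinv : Function.Involutive fun a => unop (φ a)) :
    StarRing A where
  star a := unop (φ a)
  star_involutive := hinv
  star_mul a b := by rw [map_mul, unop_mul]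
  star_add a b := by rw [map_add, unop_add]

end StarOfAntihom

section QuadraticContraction

variable {R A B ι : Type*} [CommSemiring R] [Semiring A] [Algebra R A] [Semiring B] [Algebra R B]
  [Fintype ι]

/-- The contraction `Σ_{s,t,u,v} C^{stuv}_{ijkl} x_st x_uv` of an eight-index tensor with the
entries of a matrix over an algebra; the quadratic relations of `CP_q^{N-1}` prescribe such
contractions. -/
def quadContract (C : ι → ι → ι → ι → ι → ι → ι → ι → R) (x : ι → ι → A) (i j k l : ι) : A :=
  ∑ s, ∑ t, ∑ u, ∑ v, C s t u v i j k l • (x s t * x u v)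

theorem map_quadContract (φ : A →ₐ[R] B) (C : ι → ι → ι → ι → ι → ι → ι → ι → R) (x : ι → ι → A)
    (i j k l : ι) :
    φ (quadContract C x i j k l) = quadContract C (fun i j => φ (x i j)) i j k l := by
  simp only [quadContract, map_sum, map_smul, map_mul]

theorem antihom_quadContract [Star R] {φ : B →+* Aᵐᵒᵖ}
    (hφ : ∀ r, φ (algebraMap R B r) = algebraMap R Aᵐᵒᵖ (star r))
    (C : ι → ι → ι → ι → ι → ι → ι → ι → R) (x : ι → ι → B) (i j k l : ι) :
    φ (quadContract C x i j k l) =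
      op (quadContract (fun s t u v i j k l => star (C v u t s l k j i))
        (fun i j => unop (φ (x j i))) l k j i) := by
  let reversal : ι × ι × ι × ι ≃ ι × ι × ι × ι :=
    Function.Involutive.toPerm (fun p => (p.2.2.2, p.2.2.1, p.2.1, p.1)) fun _ => rfl
  simp only [quadContract, map_sum, Finset.op_sum, map_smul_of_map_algebraMap_star hφ, map_mul,
    op_smul, op_mul, op_unop, ← Fintype.sum_prod_type']
  exact Fintype.sum_equiv reversal _ _ fun _ => rfl

theorem quadContract_eq_add [DecidableEq ι] {C D : ι → ι → ι → ι → ι → ι → ι → ι → R} {c : R}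
    (hCD : ∀ s t u v i j k l, C s t u v i j k l =
      D s t u v i j k l + c * if s = i ∧ t = j ∧ u = k ∧ v = l then 1 else 0)
    (x : ι → ι → A) (i j k l : ι) :
    quadContract C x i j k l = quadContract D x i j k l + c • (x i j * x k l) := by
  simp [quadContract, hCD, add_smul, Finset.sum_add_distrib, ite_and]

end QuadraticContraction

theorem sub_inv_mul_sum_Ioo_pow {K : Type*} [Field K] {q : K} (hq : q ≠ 0) {m n : ℕ} (h : m < n) :
    (q - q⁻¹) * ∑ b ∈ Finset.Ioo m n, q ^ (2 * b) = q ^ (2 * n) * q⁻¹ - q ^ (2 * m) * q := by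
  have telescoping_term (b : ℕ) :
      (q - q⁻¹) * q ^ (2 * b) = q ^ (2 * (b + 1)) * q⁻¹ - q ^ (2 * b) * q⁻¹ := by
    field_simp
    ring
  simp only [Finset.mul_sum, ← Finset.Ico_add_one_left_eq_Ioo, telescoping_term]
  rw [Finset.sum_Ico_sub (fun b => q ^ (2 * b) * q⁻¹) (by lia : m + 1 ≤ n)]
  field_simp
  ring

section RMatrix

variable {q : ℝ} {N : ℕ}

theorem Rmat_transpose (i j k l : Fin N) : Rmat q k l i j = Rmat q i j k l := by
  unfold Rmat; grind

theorem Rmat_eq_Rminus_add (i j k l : Fin N) :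
    Rmat q i j k l = Rminus q i j k l + ((q : ℂ) - (q : ℂ)⁻¹) * if i = k ∧ j = l then 1 else 0 := by
  rw [Rminus, sub_add_cancel]

theorem pw_sub_iv (hq : q ≠ 0) (i j : Fin N) :
    pw q (2 * iv j - 2 * iv i) = (q : ℂ) ^ (2 * (j : ℕ)) / (q : ℂ) ^ (2 * (i : ℕ)) := by
  have hexp : 2 * iv j - 2 * iv i = ((2 * (j : ℕ) : ℕ) : ℤ) - ((2 * (i : ℕ) : ℕ) : ℤ) := by
    unfold iv; push_cast; ring
  rw [pw, hexp, zpow_sub₀ (Complex.ofReal_ne_zero.mpr hq), zpow_natCast, zpow_natCast]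

theorem Rlm_eq_sub (t u a b : Fin N) :
    Rlm q t u a b = (if a = u ∧ b = t then if t = u then (q : ℂ)⁻¹ else 1 else 0) -
      if t = u ∧ a = b ∧ b < u then ((q : ℂ) - (q : ℂ)⁻¹) * pw q (2 * iv b - 2 * iv u) else 0 := by
  have hpw : pw q 0 = 1 := zpow_zero _
  unfold Rlm Rminus Rmat
  grind

theorem Rr_eq_add (a b j k : Fin N) :
    Rr q a b j k = (if b = j ∧ a = k then if j = k then (q : ℂ) else 1 else 0) +
      if j = k ∧ a = b ∧ j < a then (q : ℂ) - (q : ℂ)⁻¹ else 0 := by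
  unfold Rr Rmat
  grind

theorem Rlm_swap (t u a b : Fin N) : Rlm q u t b a = Rlm q t u a b := by
  simp only [Rlm_eq_sub]; grind

theorem Rr_swap (i j k l : Fin N) : Rr q j i l k = Rr q i j k l := by
  simp only [Rr_eq_add]; grind

theorem star_pw (m : ℤ) : star (pw q m) = pw q m := by
  simp [pw]

theorem star_Rmat (i j k l : Fin N) : star (Rmat q i j k l) = Rmat q i j k l := by
  simp [Rmat, apply_ite (starRingEnd ℂ)]

theorem star_Rminus (i j k l : Fin N) : star (Rminus q i j k l) = Rminus q i j k l := by
  simp [Rminus, Rmat, apply_ite (starRingEnd ℂ)]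

theorem sum_Rlm_mul (t u : Fin N) (f : Fin N → Fin N → ℂ) :
    ∑ a, ∑ b, Rlm q t u a b * f a b = (if t = u then (q : ℂ)⁻¹ else 1) * f u t -
      if t = u then ((q : ℂ) - (q : ℂ)⁻¹) *
        ∑ b ∈ Finset.Iio u, pw q (2 * iv b - 2 * iv u) * f b b else 0 := by
  have filter_lt : Finset.univ.filter (· < u) = Finset.Iio u := by ext; simp
  by_cases htu : t = u <;>
    simp [Rlm_eq_sub, sub_mul, ite_and, htu, Finset.mul_sum, mul_assoc, ← filter_lt,
      Finset.sum_filter]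

theorem sum_Iio_pw_mul_Rr (hq : q ≠ 0) (u j : Fin N) :
    ∑ b ∈ Finset.Iio u, pw q (2 * iv b - 2 * iv u) * Rr q b b j j =
      if j < u then (q : ℂ)⁻¹ else 0 := by
  have hqC : (q : ℂ) ≠ 0 := Complex.ofReal_ne_zero.mpr hq
  have filter_gt : (Finset.Iio u).filter (j < ·) = Finset.Ioo j u := by
    ext; simp [and_comm]
  have sum_eq : ∑ b ∈ Finset.Iio u, pw q (2 * iv b - 2 * iv u) * Rr q b b j j =
      (if j < u then pw q (2 * iv j - 2 * iv u) * q else 0) +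
        ((q : ℂ) - (q : ℂ)⁻¹) * ∑ b ∈ Finset.Ioo j u, pw q (2 * iv b - 2 * iv u) := by
    simp [Rr_eq_add, mul_add, mul_comm _ (_ - _), Finset.sum_add_distrib, Finset.mul_sum,
      ← filter_gt, Finset.sum_filter]
  rw [sum_eq]
  split_ifs with hju
  · have sum_pw : ∑ b ∈ Finset.Ioo j u, pw q (2 * iv b - 2 * iv u) =
        (∑ b ∈ Finset.Ioo (j : ℕ) u, (q : ℂ) ^ (2 * b)) / (q : ℂ) ^ (2 * (u : ℕ)) := by
      simp only [pw_sub_iv hq, ← Fin.map_valEmbedding_Ioo, Finset.sum_map, Finset.sum_div,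
        Fin.valEmbedding_apply]
    have telescoped := sub_inv_mul_sum_Ioo_pow hqC (Fin.lt_def.mp hju)
    rw [sum_pw, pw_sub_iv hq, ← mul_div_assoc, telescoped]
    field_simp
    ring
  · rw [Finset.Ioo_eq_empty hju, Finset.sum_empty, mul_zero, add_zero]

theorem sum_Rlm_mul_Rr (hq : q ≠ 0) (t u j k : Fin N) :
    ∑ a, ∑ b, Rlm q t u a b * Rr q a b j k = if t = j ∧ u = k then 1 else 0 := by
  rw [sum_Rlm_mul]
  by_cases htu : t = u
  · subst htu
    by_cases hjk : j = k
    · subst hjk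
      have hqC : (q : ℂ) ≠ 0 := Complex.ofReal_ne_zero.mpr hq
      rw [sum_Iio_pw_mul_Rr hq, Rr_eq_add]
      grind
    · have Rr_diag_eq_zero (b : Fin N) : Rr q b b j k = 0 := by rw [Rr_eq_add]; grind
      simp only [Rr_diag_eq_zero, mul_zero, Finset.sum_const_zero, ite_self, sub_zero]
      grind
  · rw [if_neg htu, if_neg htu, one_mul, sub_zero, Rr_eq_add]
    grind

theorem RCP_eq_RCPm_add (hq : q ≠ 0) (s t u v i j k l : Fin N) :
    RCP q s t u v i j k l = RCPm q s t u v i j k l +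
      ((q : ℂ) - (q : ℂ)⁻¹) * if s = i ∧ t = j ∧ u = k ∧ v = l then 1 else 0 := by
  have summand_eq (a b c : Fin N) :
      Rlm q t u a b * Rmat q s a i c * Rr q c b j k =
        Rlm q t u a b * Rminus q s a i c * Rr q c b j k +
          ((q : ℂ) - (q : ℂ)⁻¹) * (if s = i then 1 else 0) *
            if a = c then Rlm q t u a b * Rr q a b j k else 0 := by
    rw [Rmat_eq_Rminus_add]
    grind
  simp only [RCP, RCPm, summand_eq, Finset.sum_add_distrib, ← Finset.mul_sum, Finset.sum_ite_eq,
    Finset.mem_univ, if_true, sum_Rlm_mul_Rr hq]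
  grind

theorem RCPc_eq_RCP_reverse (s t u v i j k l : Fin N) :
    RCPc q s t u v i j k l = RCP q v u t s l k j i := by
  unfold RCPc RCP
  congr 1
  rw [Finset.sum_comm]
  refine Finset.sum_congr rfl fun b _ => Finset.sum_congr rfl fun a _ =>
    Finset.sum_congr rfl fun c _ => ?_
  rw [Rlm_swap, Rr_swap, Rc, Rmat_transpose]

theorem star_RCPm (s t u v i j k l : Fin N) :
    star (RCPm q s t u v i j k l) = RCPm q s t u v i j k l := by
  simp only [RCPm, Rlm, Rr, star_mul', star_sum, star_pw, star_Rmat, star_Rminus, apply_ite star,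
    star_one, star_zero]

theorem star_RCPc (s t u v i j k l : Fin N) :
    star (RCPc q s t u v i j k l) = RCPc q s t u v i j k l := by
  simp only [RCPc, Rlm, Rc, Rr, star_mul', star_sum, star_pw, star_Rmat, star_Rminus,
    apply_ite star, star_one, star_zero]

end RMatrix

namespace CPq

variable {q : ℝ} {N : ℕ}

theorem quadContract_RCPm (i j k l : Fin N) :
    quadContract (RCPm q) (X q) i j k l = (q : ℂ)⁻¹ • (X q i j * X q k l) := by
  have hrel := RingQuot.mkAlgHom_rel ℂ (CPrel.relm (q := q) i j k l)
  rwa [map_smul, map_mul, ← quadContract, map_quadContract] at hrel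

theorem quadContract_RCPc (i j k l : Fin N) :
    quadContract (RCPc q) (X q) i j k l = (q : ℂ) • (X q i j * X q k l) := by
  have hrel := RingQuot.mkAlgHom_rel ℂ (CPrel.relc (q := q) i j k l)
  rwa [map_smul, map_mul, ← quadContract, map_quadContract] at hrel

theorem sum_X_diag : ∑ i : Fin N, X q i i = 1 := by
  have hrel := RingQuot.mkAlgHom_rel ℂ (CPrel.relu (q := q) (N := N))
  rwa [map_sum, map_one] at hrel

theorem quadContract_RCPc_reverse (hq : q ≠ 0) (i j k l : Fin N) :
    quadContract (fun s t u v i j k l => RCPc q v u t s l k j i) (X q) i j k l =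
      (q : ℂ) • (X q i j * X q k l) := by
  simp only [RCPc_eq_RCP_reverse]
  rw [quadContract_eq_add (RCP_eq_RCPm_add hq), quadContract_RCPm, ← add_smul, add_sub_cancel]

theorem quadContract_RCPm_reverse (hq : q ≠ 0) (i j k l : Fin N) :
    quadContract (fun s t u v i j k l => RCPm q v u t s l k j i) (X q) i j k l =
      (q : ℂ)⁻¹ • (X q i j * X q k l) := by
  have sum_relation := quadContract_eq_add (C := RCPc q)
    (D := fun s t u v i j k l => RCPm q v u t s l k j i) (c := (q : ℂ) - (q : ℂ)⁻¹)
    (fun s t u v i j k l => by rw [RCPc_eq_RCP_reverse, RCP_eq_RCPm_add hq]; grind)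
    (X q) i j k l
  refine add_right_cancel (sum_relation.symm.trans ?_)
  rw [quadContract_RCPc, ← add_smul, add_sub_cancel]

theorem adjoin_range_X : Algebra.adjoin ℂ (Set.range fun p : Fin N × Fin N => X q p.1 p.2) = ⊤ := by
  have hsurj := RingQuot.mkAlgHom_surjective ℂ (CPrel q N)
  rw [← (AlgHom.range_eq_top _).mpr hsurj, ← Algebra.map_top, ← FreeAlgebra.adjoin_range_ι,
    AlgHom.map_adjoin, ← Set.range_comp]
  rfl

variable (q N) in
/-- The `*` of `CP_q^{N-1}` before passing to the quotient: the conjugate-linear antihomomorphism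
out of the free algebra with `x_ij ↦ x_ji`, as a homomorphism to the opposite algebra. -/
def freeStarHom : FA N →+* (CPq q N)ᵐᵒᵖ :=
  semilinearLift (starRingEnd ℂ) fun p => op (X q p.2 p.1)

theorem freeStarHom_gen (i j : Fin N) : freeStarHom q N (gen i j) = op (X q j i) :=
  semilinearLift_ι _ _ _

theorem freeStarHom_algebraMap (z : ℂ) :
    freeStarHom q N (algebraMap ℂ _ z) = algebraMap ℂ _ (star z) :=
  semilinearLift_algebraMap _ _ _

theorem freeStarHom_smul_gen_mul_gen (z : ℂ) (i j k l : Fin N) :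
    freeStarHom q N (z • (gen i j * gen k l)) = op (star z • (X q l k * X q j i)) := by
  rw [map_smul_of_map_algebraMap_star freeStarHom_algebraMap, map_mul, freeStarHom_gen,
    freeStarHom_gen, ← op_mul, ← op_smul]

theorem freeStarHom_quadContract_gen
    (C : Fin N → Fin N → Fin N → Fin N → Fin N → Fin N → Fin N → Fin N → ℂ) (i j k l : Fin N) :
    freeStarHom q N (quadContract C gen i j k l) =
      op (quadContract (fun s t u v i j k l => star (C v u t s l k j i)) (X q) l k j i) := by
  simp only [antihom_quadContract freeStarHom_algebraMap, freeStarHom_gen, unop_op]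

theorem freeStarHom_eq_of_CPrel (hq : q ≠ 0) ⦃a b : FA N⦄ (hab : CPrel q N a b) :
    freeStarHom q N a = freeStarHom q N b := by
  cases hab with
  | relm i j k l =>
    rw [← quadContract, freeStarHom_quadContract_gen, freeStarHom_smul_gen_mul_gen]
    simp only [star_RCPm, quadContract_RCPm_reverse hq, star_inv₀, Complex.star_def,
      Complex.conj_ofReal]
  | relc i j k l =>
    rw [← quadContract, freeStarHom_quadContract_gen, freeStarHom_smul_gen_mul_gen]
    simp only [star_RCPc, quadContract_RCPc_reverse hq, Complex.star_def, Complex.conj_ofReal]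
  | relu =>
    simp only [map_sum, map_one, freeStarHom_gen, ← Finset.op_sum, sum_X_diag, op_one]

/-- The `*` of `CP_q^{N-1}` as a ring homomorphism to the opposite algebra. -/
def starHom (hq : q ≠ 0) : CPq q N →+* (CPq q N)ᵐᵒᵖ :=
  RingQuot.lift ⟨freeStarHom q N, freeStarHom_eq_of_CPrel hq⟩

theorem starHom_mkAlgHom (hq : q ≠ 0) (a : FA N) :
    starHom hq (RingQuot.mkAlgHom ℂ (CPrel q N) a) = freeStarHom q N a := by
  rw [← AlgHom.coe_toRingHom, RingQuot.mkAlgHom_coe]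
  exact RingQuot.lift_mkRingHom_apply _ _ _

theorem starHom_X (hq : q ≠ 0) (i j : Fin N) : starHom hq (X q i j) = op (X q j i) := by
  rw [X, starHom_mkAlgHom, freeStarHom_gen]

theorem starHom_algebraMap (hq : q ≠ 0) (z : ℂ) :
    starHom hq (algebraMap ℂ (CPq q N) z) = algebraMap ℂ _ (star z) := by
  rw [← (RingQuot.mkAlgHom ℂ (CPrel q N)).commutes, starHom_mkAlgHom, freeStarHom_algebraMap]

theorem involutive_unop_starHom (hq : q ≠ 0) :
    Function.Involutive fun a : CPq q N => unop (starHom hq a) := by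
  refine involutive_unop_of_adjoin_eq_top (starHom_algebraMap hq) adjoin_range_X ?_
  rintro _ ⟨p, rfl⟩
  simp only [starHom_X, unop_op]

/-- The star ring structure on `CP_q^{N-1}` with `x_ij* = x_ji`. -/
abbrev starRing (hq : q ≠ 0) : StarRing (CPq q N) :=
  starRingOfAntihom (starHom hq) (involutive_unop_starHom hq)

theorem starModule (hq : q ≠ 0) :
    letI := starRing (N := N) hq
    StarModule ℂ (CPq q N) :=
  letI := starRing (N := N) hq
  ⟨fun z a => congrArg unop (map_smul_of_map_algebraMap_star (starHom_algebraMap hq) z a)⟩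

theorem star_X (hq : q ≠ 0) (i j : Fin N) :
    letI := starRing (N := N) hq
    star (X q i j) = X q j i :=
  congrArg unop (starHom_X hq i j)

end CPq

/-- `CP_q^{N-1}` admits a `*`-structure with `(x_ij)* = x_ji`. -/
theorem statement2 (q : ℝ) (hq0 : q ≠ 0) (hq1 : q ≠ 1) (hq2 : q ≠ -1) (N : ℕ) (hN : 2 ≤ N) :
    ∃ st : CPq q N → CPq q N,
      (∀ a b : CPq q N, st (a + b) = st a + st b) ∧
      (∀ (z : ℂ) (a : CPq q N), st (z • a) = (starRingEnd ℂ) z • st a) ∧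
      (∀ a : CPq q N, st (st a) = a) ∧
      (∀ a b : CPq q N, st (a * b) = st b * st a) ∧
      st 1 = 1 ∧
      (∀ i j : Fin N, st (X q i j) = X q j i) := by
  let := CPq.starRing (N := N) hq0
  have := CPq.starModule (N := N) hq0
  exact ⟨star, star_add, star_smul, star_star, star_mul, star_one _, CPq.star_X hq0⟩
end
end

section
/- Let (Γ,d) be a first order differential calculus on CP_q^{N−1} in which, for all 1 ≤ i,j ≤ N, d x_ij = q² Σ_s q^{−2s} x_is d x_sj + q⁻¹ Σ_{a,b,c,s,t,u,v} Rlm^{tu}_{bc} R⁻^{sb}_{ia} Rc^{cv}_{aj} x_st d x_uv − (s''+/s'+) x_ij ⍵ − (1/s'+) q^{2j} δ_ij ⍵, and whose bimodule structure is given for all i,j,k,l by d x_ij·x_kl = q^{−2} Σ_{a,b,c,s,t,u,v,w,x,y,z} RCPm^{xyzw}_{ijkl} Rlm^{tu}_{bc} R⁻^{sb}_{za} Rc^{cv}_{aw} x_xy x_st d x_uv + q³ Σ_{s,t,u,v,w} q^{−2w} RCPc^{stuv}_{ijkl} x_st x_uw d x_wv − (q^{2N+2}/s'+) δ_jk x_ij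 ⍵ − (q⁻¹/s'+) Σ_{a,b,c,s,v} Rr^{ab}_{jk} R⁻^{sc}_{ia} Rc^{cv}_{bl} x_sv ⍵ − (q^{−2}/s'+) q^{2j} δ_ij x_kl ⍵ − (q^{−2} s''''+/s'+) x_ij x_kl ⍵. Let Λ ⊆ Γ be the sub-bimodule generated by ⍵, let p : Γ → Γ/Λ be the quotient map, and set d' := p∘d. Then (Γ/Λ, d') is a first order differential calculus on CP_q^{N−1} in which Σ_{i,j} q^{−2j} x_ij d'x_ji = 0, d'x_ij = q² Σ_s q^{−2s} x_is d'x_sj + q⁻¹ Σ_{a,b,c,s,t,u,v} Rlm^{tu}_{bc} R⁻^{sb}_{ia} Rc^{cv}_{aj} x_st d'x_uv, and d'x_ij·x_kl = q^{−2} Σ_{a,b,c,s,t,u,v,w,x,y,z} RCPm^{xyzw}_{ijkl} Rlm^{tu}_{bc} R⁻^{sb}_{za} Rc^{cv}_{aw} x_xy x_st d'x_uv + q³ Σ_{s,t,u,v,w} q^{−2w} RCPc^{stuv}_{ijkl} x_st x_uw d'x_wv. -/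
open scoped BigOperators

noncomputable section

/-!
A sub-bimodule of `Γ` is a submodule over `A ⊗ Aᵐᵒᵖ`, so that `Γ` modulo a sub-bimodule is again
a bimodule and the projection respects both actions. The projection therefore carries the calculus,
with its linearity, Leibniz rule and spanning property, over to the quotient. Applied to an identity
between one-forms in which some terms are multiples of `⍵`, it kills exactly those terms when the
sub-bimodule contains `⍵`.
-/

open scoped TensorProduct

attribute [local instance] TensorProduct.Algebra.module

section Subbimodule

variable {k A B M : Type*} [CommSemiring k] [Semiring A] [Semiring B] [Algebra k A]
  [Algebra k B] [AddCommMonoid M] [Module k M] [Module A M] [Module B M] [IsScalarTower k A M]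
  [IsScalarTower k B M] [SMulCommClass A B M]

instance isScalarTower_left_tensorProduct : IsScalarTower A (A ⊗[k] B) M where
  smul_assoc a x m := by
    induction x with
    | zero => simp only [smul_zero, zero_smul]
    | tmul a' b => exact mul_smul a a' (b • m)
    | add x y hx hy => simp only [smul_add, add_smul, hx, hy]

instance isScalarTower_base_tensorProduct : IsScalarTower k (A ⊗[k] B) M where
  smul_assoc c x m := by
    rw [← algebraMap_smul A c x, smul_assoc, algebraMap_smul]

theorem restrictScalars_span_tensorProduct (S : Set M) :
    (Submodule.span (A ⊗[k] B) S).restrictScalars k =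
      Submodule.span k {z | ∃ a : A, ∃ b : B, ∃ m ∈ S, z = a • b • m} := by
  rw [← Submodule.span_smul_of_span_eq_top (TensorProduct.span_tmul_eq_top k A B)]
  congr 1
  ext z
  constructor
  · rintro ⟨_, ⟨a, b, rfl⟩, m, hm, rfl⟩
    exact ⟨a, b, m, hm, rfl⟩
  · rintro ⟨a, b, m, hm, rfl⟩
    exact ⟨a ⊗ₜ b, ⟨a, b, rfl⟩, m, hm, rfl⟩

end Subbimodule

theorem mem_span_tensorProduct_op_iff {k A B M : Type*} [CommSemiring k] [Semiring A]
    [Semiring B] [Algebra k A] [Algebra k B] [AddCommMonoid M] [Module k M] [Module A M]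
    [Module Bᵐᵒᵖ M] [IsScalarTower k A M] [IsScalarTower k Bᵐᵒᵖ M]
    [SMulCommClass A Bᵐᵒᵖ M] {S : Set M} {m : M} :
    m ∈ Submodule.span (A ⊗[k] Bᵐᵒᵖ) S ↔ m ∈ Submodule.span k
      {z | ∃ a : A, ∃ b : B, ∃ s ∈ S, z = a • MulOpposite.op b • s} := by
  rw [← Submodule.restrictScalars_mem k, restrictScalars_span_tensorProduct]
  simp only [MulOpposite.op_surjective.exists]

section Quotient

variable {k A B M : Type*} [CommRing k] [Ring A] [Ring B] [Algebra k A] [Algebra k B]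
  [AddCommGroup M] [Module k M] [Module A M] [Module B M] [IsScalarTower k A M]
  [IsScalarTower k B M] [SMulCommClass A B M] (L : Submodule (A ⊗[k] B) M)

/-- The action of the second ring `B` on the quotient of an `A`-`B`-bimodule by a sub-bimodule.
The action of `A` needs no counterpart: it is found through `isScalarTower_left_tensorProduct`. -/
abbrev quotientModuleRight : Module B (M ⧸ L) :=
  Module.compHom _ (Algebra.TensorProduct.includeRight : B →ₐ[k] A ⊗[k] B).toRingHom

attribute [local instance] quotientModuleRight

theorem mkQ_smul_right (b : B) (m : M) : L.mkQ (b • m) = b • L.mkQ m := by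
  change L.mkQ (b • m) = (1 ⊗ₜ b : A ⊗[k] B) • L.mkQ m
  rw [← map_smul, TensorProduct.Algebra.smul_def, one_smul]

-- Not an instance: `TensorProduct.Algebra.module` would then give `M ⧸ L` a second action of
-- `A ⊗[k] B`, which is not definitionally the quotient one.
theorem smulCommClass_quotient : SMulCommClass A B (M ⧸ L) :=
  L.mkQ_surjective.smulCommClass (fun _ _ => rfl) (mkQ_smul_right L)

theorem isScalarTower_quotient_right : IsScalarTower k B (M ⧸ L) where
  smul_assoc c b := L.mkQ_surjective.forall.2 fun m => by
    rw [← mkQ_smul_right, ← mkQ_smul_right, smul_assoc]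
    rfl

end Quotient

namespace FODC

attribute [local instance] quotientModuleRight

variable {A : Type} [Ring A] [Algebra ℂ A] (D : FODC A) (L : Submodule (A ⊗[ℂ] Aᵐᵒᵖ) D.Γ)

theorem span_smul_mkQ_d :
    Submodule.span ℂ {z : D.Γ ⧸ L | ∃ a b : A, z = a • L.mkQ (D.d b)} = ⊤ := by
  have image_eq : L.mkQ.restrictScalars ℂ '' {z | ∃ a b : A, z = a • D.d b} =
      {z | ∃ a b : A, z = a • L.mkQ (D.d b)} := by
    ext z
    constructor
    · rintro ⟨_, ⟨a, b, rfl⟩, rfl⟩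
      exact ⟨a, b, rfl⟩
    · rintro ⟨a, b, rfl⟩
      exact ⟨a • D.d b, ⟨a, b, rfl⟩, rfl⟩
  rw [← image_eq, ← Submodule.map_span, D.spanning, Submodule.map_top]
  exact LinearMap.range_eq_top.2 L.mkQ_surjective

/-- The factor calculus of `D` by the sub-bimodule `L` of its one-forms, sub-bimodules being
encoded as submodules over `A ⊗ Aᵐᵒᵖ`. -/
def quotient : FODC A where
  Γ := D.Γ ⧸ L
  smulComm := smulCommClass_quotient L
  towerR := isScalarTower_quotient_right L
  d a := L.mkQ (D.d a)
  d_add a b := by rw [D.d_add, map_add]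
  d_smul c a := by rw [D.d_smul]; rfl
  leibniz a b := by rw [D.leibniz, map_add, mkQ_smul_right]; rfl
  spanning := D.span_smul_mkQ_d L

/-- The projection of the one-forms of `D` onto those of the factor calculus `D.quotient L`. -/
def quotientMap : D.Γ →ₗ[ℂ] (D.quotient L).Γ := L.mkQ.restrictScalars ℂ

theorem quotient_d (a : A) : (D.quotient L).d a = D.quotientMap L (D.d a) := rfl

theorem quotientMap_smul (a : A) (γ : D.Γ) :
    D.quotientMap L (a • γ) = a • D.quotientMap L γ := rfl

theorem quotientMap_op_smul (a : A) (γ : D.Γ) :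
    D.quotientMap L (MulOpposite.op a • γ) = MulOpposite.op a • D.quotientMap L γ :=
  mkQ_smul_right L _ _

theorem quotientMap_surjective : Function.Surjective (D.quotientMap L) := L.mkQ_surjective

theorem quotientMap_eq_zero_iff {γ : D.Γ} : D.quotientMap L γ = 0 ↔ γ ∈ L :=
  Submodule.Quotient.mk_eq_zero L

end FODC

theorem om_quotient (q : ℝ) {N : ℕ} (D : FODC (CPq q N))
    (L : Submodule (CPq q N ⊗[ℂ] (CPq q N)ᵐᵒᵖ) D.Γ) :
    om q (D.quotient L) = D.quotientMap L (om q D) := by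
  simp only [om, D.quotient_d, map_sum, map_smul, D.quotientMap_smul]

/-- factorising the calculus `Γ̃` by the sub-bimodule generated by `⍵` yields `Γ̃̃`. -/
theorem statement12 (q : ℝ) (hq0 : q ≠ 0) (hq1 : q ≠ 1) (hq2 : q ≠ -1) (N : ℕ) (hN : 2 ≤ N) (D : FODC (CPq q N))
    (hrel : ∀ i j : Fin N, D.d (X q i j) =
      (q : ℂ) ^ 2 • (∑ s : Fin N, pw q (-2 * iv s) • (X q i s • D.d (X q s j)))
        + (q : ℂ)⁻¹ • (∑ a : Fin N, ∑ b : Fin N, ∑ c : Fin N, ∑ s : Fin N, ∑ t : Fin N, ∑ u : Fin N, ∑ v : Fin N, (Rlm q t u b c * Rminus q s b i a * Rc q c v a j) • (X q s t • D.d (X q u v)))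
        - (s2P q N / s1P q N) • (X q i j • om q D)
        - ((1 / s1P q N) * pw q (2 * iv j) * kd i j) • om q D)
    (hbim : ∀ i j k l : Fin N,
      MulOpposite.op (X q k l) • D.d (X q i j) =
      pw q (-2) • (∑ a : Fin N, ∑ b : Fin N, ∑ c : Fin N, ∑ s : Fin N, ∑ t : Fin N, ∑ u : Fin N, ∑ v : Fin N, ∑ w : Fin N, ∑ x' : Fin N, ∑ y : Fin N, ∑ z : Fin N, (RCPm q x' y z w i j k l * Rlm q t u b c * Rminus q s b z a * Rc q c v a w) • ((X q x' y * X q s t) • D.d (X q u v)))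
        + pw q 3 • (∑ s : Fin N, ∑ t : Fin N, ∑ u : Fin N, ∑ v : Fin N, ∑ w : Fin N, (pw q (-2 * iv w) * RCPc q s t u v i j k l) • ((X q s t * X q u w) • D.d (X q w v)))
        - ((pw q (2 * (N : ℤ) + 2) / s1P q N) * kd j k) • (X q i j • om q D)
        - (pw q (-1) / s1P q N) • (∑ a : Fin N, ∑ b : Fin N, ∑ c : Fin N, ∑ s : Fin N, ∑ v : Fin N, (Rr q a b j k * Rminus q s c i a * Rc q c v b l) • (X q s v • om q D))
        - ((pw q (-2) / s1P q N) * pw q (2 * iv j) * kd i j) • (X q k l • om q D)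
        - (pw q (-2) * s4P q N / s1P q N) • ((X q i j * X q k l) • om q D)) :
    ∃ (D' : FODC (CPq q N)) (p : D.Γ → D'.Γ),
      (∀ g h : D.Γ, p (g + h) = p g + p h) ∧
      (∀ (z : ℂ) (g : D.Γ), p (z • g) = z • p g) ∧
      (∀ (a : CPq q N) (g : D.Γ), p (a • g) = a • p g) ∧
      (∀ (a : CPq q N) (g : D.Γ), p (MulOpposite.op a • g) = MulOpposite.op a • p g) ∧
      Function.Surjective p ∧
      (∀ g : D.Γ, p g = 0 ↔ g ∈ Submodule.span ℂ
        {z : D.Γ | ∃ a b : CPq q N, ∃ s0 ∈ ({om q D} : Set D.Γ), z = a • MulOpposite.op b • s0}) ∧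
      (∀ a : CPq q N, D'.d a = p (D.d a)) ∧
      om q D' = 0 ∧
      (∀ i j : Fin N, D'.d (X q i j) =
        (q : ℂ) ^ 2 • (∑ s : Fin N, pw q (-2 * iv s) • (X q i s • D'.d (X q s j)))
        + (q : ℂ)⁻¹ • (∑ a : Fin N, ∑ b : Fin N, ∑ c : Fin N, ∑ s : Fin N, ∑ t : Fin N, ∑ u : Fin N, ∑ v : Fin N, (Rlm q t u b c * Rminus q s b i a * Rc q c v a j) • (X q s t • D'.d (X q u v)))) ∧
      (∀ i j k l : Fin N, MulOpposite.op (X q k l) • D'.d (X q i j) =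
        pw q (-2) • (∑ a : Fin N, ∑ b : Fin N, ∑ c : Fin N, ∑ s : Fin N, ∑ t : Fin N, ∑ u : Fin N, ∑ v : Fin N, ∑ w : Fin N, ∑ x' : Fin N, ∑ y : Fin N, ∑ z : Fin N, (RCPm q x' y z w i j k l * Rlm q t u b c * Rminus q s b z a * Rc q c v a w) • ((X q x' y * X q s t) • D'.d (X q u v)))
        + pw q 3 • (∑ s : Fin N, ∑ t : Fin N, ∑ u : Fin N, ∑ v : Fin N, ∑ w : Fin N, (pw q (-2 * iv w) * RCPc q s t u v i j k l) • ((X q s t * X q u w) • D'.d (X q w v)))) := by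
  let L : Submodule (CPq q N ⊗[ℂ] (CPq q N)ᵐᵒᵖ) D.Γ := Submodule.span _ {om q D}
  have map_om : D.quotientMap L (om q D) = 0 :=
    (D.quotientMap_eq_zero_iff L).2 (Submodule.mem_span_singleton_self _)
  refine ⟨D.quotient L, D.quotientMap L, map_add _, map_smul _, D.quotientMap_smul L,
    D.quotientMap_op_smul L, D.quotientMap_surjective L,
    fun g => (D.quotientMap_eq_zero_iff L).trans mem_span_tensorProduct_op_iff,
    D.quotient_d L, (om_quotient q D L).trans map_om, fun i j => ?_, fun i j k l => ?_⟩
  · simpa only [D.quotient_d, map_add, map_sub, map_smul, map_sum, D.quotientMap_smul, map_om,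
      smul_zero, sub_zero] using congrArg (D.quotientMap L) (hrel i j)
  · have h := congrArg (D.quotientMap L) (hbim i j k l)
    simp only [map_add, map_sub, map_smul, map_sum, D.quotientMap_smul, D.quotientMap_op_smul,
      map_om, smul_zero, Finset.sum_const_zero, sub_zero] at h
    exact h
end
end
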